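/- Let n ≥ 1. The global self-similar Minkowski dimension of the set of dyadic lattice points satisfies dim_LG((2^ℕ)ⁿ) = 0, where 2^ℕ = {2^k : k ∈ ℕ} and (2^ℕ)ⁿ = 2^ℕ × ⋯ × 2^ℕ ⊂ ℝⁿ. -/

import Mathlib

/-!
Fix a ball of radius `R` and a scale `r`, and put `t = R / r`. In each coordinate the powers of
two lying in an interval of length `2R` are, apart from the smallest one, all below `4R`, because
powers `2^m < 2^k` satisfy `2^k - 2^m ≥ 2^k / 2`. The powers up to `r` fit in a single
interval of length `r`, and only about `log₂ (4t)` powers lie between `r` and `4R`, so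
`log₂ (4t) + 3` intervals of length `r` suffice (`exists_cover_coord`). Taking products, the
covering number in `ℝⁿ` is at most `(log₂ (4t) + 3)^n` (`Ncov_dyadic_le`), whence
`log N_cov / log t ≤ 6n / √(log t) ≤ 6n / √(log N)` whenever `t ≥ N ≥ e` (`ratio_le`). This bound
is uniform in the ball and the scale and tends to `0` as `N → ∞`; all ratios are nonnegative.
-/

open MeasureTheory Metric Filter Set ENNReal NNReal

noncomputable section

/-- Points of `ℝⁿ`. -/
abbrev Pt (n : ℕ) := EuclideanSpace ℝ (Fin n)

/-- The axis-parallel closed cube with lower corner `c` and edge length `r`. -/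
def closedCube {n : ℕ} (c : Pt n) (r : ℝ) : Set (Pt n) :=
  {x | ∀ i, c i ≤ x i ∧ x i ≤ c i + r}

/-- `Ncov r E`: the minimal number of axis-parallel closed cubes of edge length `r`
needed to cover `E` (junk value `0` if no finite cover exists). -/
def Ncov {n : ℕ} (r : ℝ) (E : Set (Pt n)) : ℕ :=
  sInf {m : ℕ | ∃ s : Finset (Pt n), s.card = m ∧ E ⊆ ⋃ c ∈ s, closedCube c r}

/-- Upper Minkowski dimension (intended for bounded sets). -/
def dimM {n : ℕ} (F : Set (Pt n)) : ℝ :=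
  limsup (fun r : ℝ => Real.log (Ncov r F) / Real.log (1 / r)) (nhdsWithin 0 (Ioi 0))

/-- The set of ratios `log N_cov(r, E ∩ B) / log (r_B / r)` over balls `B = B(x, r_B)`
with `N * r ≤ r_B ≤ R`. -/
def locRatios {n : ℕ} (E : Set (Pt n)) (N r R : ℝ) : Set ℝ :=
  {d | ∃ (x : Pt n) (rB : ℝ), 0 < rB ∧ N * r ≤ rB ∧ rB ≤ R ∧
        d = Real.log (Ncov r (E ∩ ball x rB)) / Real.log (rB / r)}

/-- The local self-similar Minkowski dimension. -/
def dimLoc {n : ℕ} (E : Set (Pt n)) : ℝ :=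
  liminf (fun N : ℝ =>
    limsup (fun r : ℝ => sSup (locRatios E N r 1)) (nhdsWithin 0 (Ioi 0))) atTop

/-- The global self-similar Minkowski dimension. -/
def dimGlob {n : ℕ} (E : Set (Pt n)) : ℝ :=
  liminf (fun N : ℝ =>
    sSup {d : ℝ | ∃ r : ℝ, 0 < r ∧ ∃ (x : Pt n) (rB : ℝ), 0 < rB ∧ N * r ≤ rB ∧
      d = Real.log (Ncov r (E ∩ ball x rB)) / Real.log (rB / r)}) atTop

/-- The `Q_α`-energy `Φ_α(u, B(x₀,r)) = |B|^{2α/n-1} ∬_{B×B} |u(x)-u(y)|²/|x-y|^{n+2α}`. -/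
def Phi {n : ℕ} (α : ℝ) (u : Pt n → ℝ) (x₀ : Pt n) (r : ℝ) : ℝ≥0∞ :=
  (volume (ball x₀ r)) ^ (2 * α / (n : ℝ) - 1) *
    ∫⁻ x in ball x₀ r, ∫⁻ y in ball x₀ r,
      ENNReal.ofReal (|u x - u y| ^ 2 / ‖x - y‖ ^ ((n : ℝ) + 2 * α))

/-- The `Q_α`-norm of `u`. -/
def Qnorm {n : ℕ} (α : ℝ) (u : Pt n → ℝ) : ℝ≥0∞ :=
  ⨆ (x₀ : Pt n) (r : ℝ) (_ : 0 < r),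
    (ENNReal.ofReal (r ^ (2 * α - (n : ℝ))) *
      ∫⁻ x in ball x₀ r, ∫⁻ y in ball x₀ r,
        ENNReal.ofReal (|u x - u y| ^ 2 / ‖x - y‖ ^ ((n : ℝ) + 2 * α))) ^ (1/2 : ℝ)

/-- Membership in `Q_α(ℝⁿ)`: `u ∈ L²_loc` and the `Q_α`-norm is finite. -/
def MemQ {n : ℕ} (α : ℝ) (u : Pt n → ℝ) : Prop :=
  LocallyIntegrable (fun x => |u x| ^ 2) volume ∧ Qnorm α u < ⊤

/-- `Ψ_{α,q}(u, B(x₀,r))`. -/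
def Psi {n : ℕ} (α q : ℝ) (u : Pt n → ℝ) (x₀ : Pt n) (r : ℝ) : ℝ≥0∞ :=
  ∑' k : ℕ, ENNReal.ofReal ((2:ℝ) ^ (2 * (k:ℝ) * α)) *
    ((volume (ball x₀ r))⁻¹ * ∫⁻ x in ball x₀ r,
      ⨅ c : ℝ, ((volume (ball x ((2:ℝ) ^ (-(k:ℝ)) * r)))⁻¹ *
        ∫⁻ z in ball x ((2:ℝ) ^ (-(k:ℝ)) * r), ENNReal.ofReal (|u z - c| ^ q)) ^ (2 / q))

/-- The quantity `inf_c ( ⨍_{B(x,ρ)} |u - c|^σ )^{1/σ}`. -/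
def oscAvg {n : ℕ} (σ : ℝ) (u : Pt n → ℝ) (x : Pt n) (ρ : ℝ) : ℝ≥0∞ :=
  ⨅ c : ℝ, ((volume (ball x ρ))⁻¹ *
    ∫⁻ w in ball x ρ, ENNReal.ofReal (|u w - c| ^ σ)) ^ (1/σ)

/-- `f` is `η`-quasisymmetric, where the homeomorphism `η` of `[0,∞)` is encoded as an
order isomorphism of `ℝ≥0`. -/
def IsQS {n : ℕ} (f : Pt n → Pt n) (η : ℝ≥0 ≃o ℝ≥0) : Prop :=
  ∀ x a b : Pt n, x ≠ b →
    nndist (f x) (f a) ≤ η (nndist x a / nndist x b) * nndist (f x) (f b)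

/-- The local Muckenhoupt class `A₁(ℝⁿ; S)`: the `A₁` condition holds on every ball
`B(x₀,r)` with `2r < dist(x₀, S)`. -/
def MemA1 {n : ℕ} (w : Pt n → ℝ) (S : Set (Pt n)) : Prop :=
  ∃ C > 0, ∀ (x₀ : Pt n) (r : ℝ), 0 < r →
    ENNReal.ofReal (2 * r) < EMetric.infEdist x₀ S →
    ⨍ x in ball x₀ r, w x ∂volume ≤ C * essInf w (volume.restrict (ball x₀ r))

/-- `J` is the a.e. Jacobian of `f` (`J = |det Df|` a.e.) and the change-of-variables
formula holds for all nonnegative measurable integrands. -/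
def JacobianCOV {n : ℕ} (f : Pt n → Pt n) (J : Pt n → ℝ) : Prop :=
  (∀ᵐ x ∂(volume : Measure (Pt n)), ∃ D : Pt n →L[ℝ] Pt n,
      HasFDerivAt f D x ∧ J x = |D.det|) ∧
  ∀ g : Pt n → ℝ≥0∞, Measurable g →
    ∫⁻ x, g (f x) * ENNReal.ofReal (J x) = ∫⁻ y, g y

/-- The hyperplane `ℝ^{n-1} × {0}` (the last coordinate vanishes). -/
def Hset (n : ℕ) : Set (Pt n) := {x | ∀ i : Fin n, (i : ℕ) = n - 1 → x i = 0}

/-- The open upper half-space (last coordinate positive). -/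
def upperHalf (n : ℕ) : Set (Pt n) := {x | ∀ i : Fin n, (i : ℕ) = n - 1 → 0 < x i}

/-- The open lower half-space (last coordinate negative). -/
def lowerHalf (n : ℕ) : Set (Pt n) := {x | ∀ i : Fin n, (i : ℕ) = n - 1 → x i < 0}

/-- The hyperbolic length `∫₀¹ |γ'(t)|/dist(γ(t),H) dt` of a curve `γ`. -/
def hypLen {n : ℕ} (H : Set (Pt n)) (γ : ℝ → Pt n) : ℝ :=
  ∫ t in (0:ℝ)..1, ‖deriv γ t‖ / Metric.infDist (γ t) H

/-- The hyperbolic-type distance associated with the set `H`: the infimum of hyperbolic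
lengths of differentiable curves joining `z` and `w` in the complement of `H`. -/
def hypDist {n : ℕ} (H : Set (Pt n)) (z w : Pt n) : ℝ :=
  sInf {L : ℝ | ∃ γ : ℝ → Pt n, γ 0 = z ∧ γ 1 = w ∧
    (∀ t ∈ Icc (0:ℝ) 1, DifferentiableAt ℝ γ t ∧ γ t ∉ H) ∧ L = hypLen H γ}

/-- `L_f(z,t) = sup { |f(z)-f(w)| : |z-w| ≤ t }`. -/
def Lf {n : ℕ} (f : Pt n → Pt n) (z : Pt n) (t : ℝ) : ℝ :=
  sSup ((fun w => dist (f z) (f w)) '' closedBall z t)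


/-- The part of `2^ℕ` in an interval of length `2R` is covered by at most `log₂ (4R/r) + 3`
intervals of length `r`: one starting at `0` for the powers up to `r`, one at the smallest
power in the interval, and one at each of the remaining powers, which lie in `(r, 4R)`. -/
lemma exists_cover_coord (a r R : ℝ) (hr : 0 < r) (hrR : r ≤ R) :
    ∃ S : Finset ℝ, S.card ≤ ⌊Real.logb 2 (4 * (R / r))⌋₊ + 3 ∧
      ∀ k : ℕ, |(2 : ℝ) ^ k - a| < R → ∃ c ∈ S, c ≤ (2 : ℝ) ^ k ∧ (2 : ℝ) ^ k ≤ c + r := by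
  classical
  have hex : ∃ k : ℕ, r < (2 : ℝ) ^ k := pow_unbounded_of_one_lt r one_lt_two
  obtain ⟨k₀, hk₀, hmin₀⟩ : ∃ k₀ : ℕ, r < (2 : ℝ) ^ k₀ ∧ ∀ k : ℕ, r < (2 : ℝ) ^ k → k₀ ≤ k :=
    ⟨Nat.find hex, Nat.find_spec hex, fun k hk => Nat.find_min' hex hk⟩
  obtain ⟨m, hm⟩ : ∃ m : ℕ, ∀ k : ℕ, |(2 : ℝ) ^ k - a| < R → m ≤ k ∧ |(2 : ℝ) ^ m - a| < R := by
    by_cases h : ∃ k : ℕ, |(2 : ℝ) ^ k - a| < R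
    · exact ⟨Nat.find h, fun k hk => ⟨Nat.find_min' h hk, Nat.find_spec h⟩⟩
    · exact ⟨0, fun k hk => absurd ⟨k, hk⟩ h⟩
  set J := ⌊Real.logb 2 (4 * (R / r))⌋₊ with hJ
  refine ⟨insert 0 (insert ((2 : ℝ) ^ m)
    ((Finset.range (J + 1)).image fun j => (2 : ℝ) ^ (k₀ + j))), ?_, ?_⟩
  · refine (Finset.card_insert_le _ _).trans ?_
    have h1 := Finset.card_insert_le ((2 : ℝ) ^ m)
      ((Finset.range (J + 1)).image fun j => (2 : ℝ) ^ (k₀ + j))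
    have h2 := Finset.card_image_le (s := Finset.range (J + 1)) (f := fun j => (2 : ℝ) ^ (k₀ + j))
    rw [Finset.card_range] at h2
    omega
  · intro k hk
    have hpos : (0 : ℝ) < 2 ^ k := by positivity
    rcases le_or_gt ((2 : ℝ) ^ k) r with hkr | hkr
    · exact ⟨0, by simp, hpos.le, by linarith⟩
    obtain ⟨hmk, hma⟩ := hm k hk
    rcases hmk.eq_or_lt with rfl | hlt
    · exact ⟨(2 : ℝ) ^ m, by simp, le_rfl, by linarith⟩
    -- Two distinct powers at distance less than `2R` force the larger one below `4R`.
    have h4R : (2 : ℝ) ^ k < 4 * R := by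
      have h1 : (2 : ℝ) ^ (m + 1) ≤ 2 ^ k := pow_le_pow_right₀ one_le_two hlt
      rw [pow_succ] at h1
      rw [abs_lt] at hk hma
      linarith
    obtain ⟨j, rfl⟩ := Nat.exists_eq_add_of_le (hmin₀ k hkr)
    refine ⟨(2 : ℝ) ^ (k₀ + j), ?_, le_rfl, by linarith⟩
    have hj : (j : ℝ) ≤ Real.logb 2 (4 * (R / r)) := by
      have hR : 0 < R := hr.trans_le hrR
      rw [Real.le_logb_iff_rpow_le one_lt_two (by positivity), Real.rpow_natCast]
      rw [← mul_div_assoc, le_div_iff₀ hr]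
      rw [pow_add] at h4R
      have : (0 : ℝ) < 2 ^ j := by positivity
      nlinarith
    have hjJ : j ≤ J := Nat.le_floor hj
    simp only [Finset.mem_insert, Finset.mem_image, Finset.mem_range]
    exact Or.inr (Or.inr ⟨j, by omega, rfl⟩)

/-- Products of the one-dimensional covers bound the covering number in `ℝⁿ`. -/
lemma Ncov_dyadic_le (n : ℕ) (x : Pt n) (r R : ℝ) (hr : 0 < r) (hrR : r ≤ R) :
    Ncov r ({x : Pt n | ∀ i, ∃ k : ℕ, x i = ((2 ^ k : ℕ) : ℝ)} ∩ ball x R) ≤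
      (⌊Real.logb 2 (4 * (R / r))⌋₊ + 3) ^ n := by
  classical
  choose S hcard hS using fun i : Fin n => exists_cover_coord (x i) r R hr hrR
  let s : Finset (Pt n) := (Fintype.piFinset S).image (WithLp.toLp 2)
  have hs : s.card ≤ (⌊Real.logb 2 (4 * (R / r))⌋₊ + 3) ^ n := by
    refine Finset.card_image_le.trans ?_
    rw [Fintype.card_piFinset]
    refine (Finset.prod_le_pow_card _ _ _ fun i _ => hcard i).trans ?_
    simp
  refine le_trans (Nat.sInf_le ⟨s, rfl, ?_⟩) hs
  rintro y ⟨hy, hyB⟩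
  have hc : ∀ i, ∃ c ∈ S i, c ≤ y i ∧ y i ≤ c + r := by
    intro i
    obtain ⟨k, hk⟩ := hy i
    have hk' : y i = (2 : ℝ) ^ k := by rw [hk]; push_cast; rfl
    rw [hk']
    refine hS i k ?_
    rw [← hk']
    have h1 : ‖(y - x) i‖ ≤ ‖y - x‖ := PiLp.norm_apply_le (y - x) i
    rw [mem_ball, dist_eq_norm] at hyB
    exact lt_of_le_of_lt h1 hyB
  choose c hcS hc1 using hc
  refine mem_iUnion₂.2 ⟨WithLp.toLp 2 c, ?_, fun i => hc1 i⟩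
  exact Finset.mem_image.2 ⟨c, Fintype.mem_piFinset.2 hcS, rfl⟩

/-- With `s = log t` and `t = R / r`, the covering number is at most `(7 s) ^ n`, and
`log (7 s) ≤ 2 √(7 s) ≤ 6 √s`. -/
lemma ratio_le (n : ℕ) (x : Pt n) (r R N : ℝ) (hr : 0 < r) (hN : Real.exp 1 ≤ N)
    (hNR : N * r ≤ R) :
    Real.log (Ncov r ({x : Pt n | ∀ i, ∃ k : ℕ, x i = ((2 ^ k : ℕ) : ℝ)} ∩ ball x R)) /
      Real.log (R / r) ≤ 6 * n / √(Real.log N) := by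
  have he : (1 : ℝ) < Real.exp 1 := Real.one_lt_exp_iff.2 one_pos
  have hNt : N ≤ R / r := (le_div_iff₀ hr).2 hNR
  have hrR : r ≤ R := by nlinarith
  have hcov := Ncov_dyadic_le n x r R hr hrR
  set C := Ncov r ({x : Pt n | ∀ i, ∃ k : ℕ, x i = ((2 ^ k : ℕ) : ℝ)} ∩ ball x R)
  set t := R / r
  have hN0 : 0 < N := by linarith
  have ht0 : 0 < t := by linarith
  have hsN1 : 1 ≤ Real.log N := (Real.le_log_iff_exp_le hN0).2 hN
  have hNs : Real.log N ≤ Real.log t := Real.log_le_log hN0 hNt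
  set s := Real.log t
  have hs1 : 1 ≤ s := hsN1.trans hNs
  have hM : ((⌊Real.logb 2 (4 * t)⌋₊ + 3 : ℕ) : ℝ) ≤ 7 * s := by
    have hlog : Real.logb 2 (4 * t) = 2 + s / Real.log 2 := by
      rw [Real.logb_mul (by norm_num) ht0.ne', show (4 : ℝ) = 2 ^ (2 : ℕ) by norm_num,
        Real.logb_pow]
      rw [Real.logb_self_eq_one one_lt_two]
      simp [Real.logb, s]
    have h2 := Real.log_two_gt_d9
    have hdiv : s / Real.log 2 ≤ 2 * s := by
      rw [div_le_iff₀ (by linarith)]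
      nlinarith
    have hfl : (⌊Real.logb 2 (4 * t)⌋₊ : ℝ) ≤ Real.logb 2 (4 * t) := by
      refine Nat.floor_le ?_
      rw [hlog]
      have : 0 ≤ s / Real.log 2 := div_nonneg (by linarith) (by linarith)
      linarith
    push_cast
    linarith
  have hlogC : Real.log C ≤ n * Real.log (7 * s) := by
    rcases Nat.eq_zero_or_pos C with h0 | h0
    · rw [h0]
      simpa using mul_nonneg (Nat.cast_nonneg n) (Real.log_nonneg (by linarith : 1 ≤ 7 * s))
    · rw [← Real.log_pow]
      refine Real.log_le_log (by exact_mod_cast h0) ?_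
      calc (C : ℝ) ≤ (((⌊Real.logb 2 (4 * t)⌋₊ + 3) ^ n : ℕ) : ℝ) := by exact_mod_cast hcov
        _ = ((⌊Real.logb 2 (4 * t)⌋₊ + 3 : ℕ) : ℝ) ^ n := by push_cast; rfl
        _ ≤ (7 * s) ^ n := by gcongr
  have hlog7 : Real.log (7 * s) ≤ 6 * √s := by
    have h1 : Real.log (√(7 * s)) = Real.log (7 * s) / 2 := Real.log_sqrt (by linarith)
    have h2 := Real.log_le_self (Real.sqrt_nonneg (7 * s))
    have h3 : √(7 * s) ≤ 3 * √s := by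
      rw [Real.sqrt_le_left (by positivity), mul_pow, Real.sq_sqrt (by linarith)]
      linarith
    linarith
  calc Real.log C / s ≤ n * (6 * √s) / s := by
        gcongr
        exact hlogC.trans (by gcongr)
    _ = 6 * n / √s := by
        have hss : √s * √s = s := Real.mul_self_sqrt (by linarith)
        have : 0 < √s := Real.sqrt_pos.2 (by linarith)
        rw [div_eq_div_iff (by linarith) this.ne']
        linear_combination (6 * (n : ℝ)) * hss
    _ ≤ 6 * n / √(Real.log N) := by gcongr

/-- `dim_LG ((2^ℕ)ⁿ) = 0`, where `2^ℕ = {2^k : k ∈ ℕ}`. -/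
theorem dimGlob_dyadicLattice (n : ℕ) (hn : 1 ≤ n) :
    dimGlob {x : Pt n | ∀ i, ∃ k : ℕ, x i = ((2 ^ k : ℕ) : ℝ)} = 0 := by
  refine Tendsto.liminf_eq ?_
  have hlim : Tendsto (fun N : ℝ => 6 * (n : ℝ) / √(Real.log N)) atTop (nhds 0) :=
    (Real.tendsto_sqrt_atTop.comp Real.tendsto_log_atTop).const_div_atTop _
  refine tendsto_of_tendsto_of_tendsto_of_le_of_le' tendsto_const_nhds hlim ?_ ?_
  · filter_upwards [eventually_ge_atTop 1] with N hN
    refine Real.sSup_nonneg ?_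
    rintro d ⟨r, hr, x, R, -, hNR, rfl⟩
    refine div_nonneg (Real.log_natCast_nonneg _) (Real.log_nonneg ?_)
    exact hN.trans ((le_div_iff₀ hr).2 hNR)
  · filter_upwards [eventually_ge_atTop (Real.exp 1)] with N hN
    refine Real.sSup_le ?_ (by positivity)
    rintro d ⟨r, hr, x, R, -, hNR, rfl⟩
    exact ratio_le n x r R N hr hN hNR

end
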